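/- Every N-valid propositional formula is CL-valid, i.e., every formula for which Proponent has a winning strategy in the dialogue game with rules D10 and D13 also has a Proponent winning strategy in the dialogue game with rules D10, D13, and E. -/

import Mathlib

/-! ## Dialogical logic: formulas, statements, moves -/

/-- Propositional formulas, built from atoms (indexed by `ℕ`) and `¬`, `∧`, `∨`, `→`. -/
inductive Formula : Type
  | atom : ℕ → Formula
  | neg : Formula → Formula
  | conj : Formula → Formula → Formula
  | disj : Formula → Formula → Formula
  | impl : Formula → Formula → Formula
  deriving DecidableEq, Inhabited

/-- Statements: formulas together with the three symbolic attacks `∧_L`, `∧_R` and `?`. -/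
inductive Statement : Type
  | form : Formula → Statement
  | conjL : Statement  -- the symbolic attack ∧_L
  | conjR : Statement  -- the symbolic attack ∧_R
  | question : Statement   -- the symbolic attack ?
  deriving DecidableEq, Inhabited

/-- A formula is atomic iff it is an atom. -/
def Formula.isAtomic : Formula → Prop
  | .atom _ => True
  | _ => False

/-- A move of a dialogue: a statement together with a reference.  The reference is
`none` for the initial move, `some (m, true)` for an attack on the assertion made at
move `m`, and `some (m, false)` for a defense against the attack made at move `m`. -/
structure Move : Type where
  stmt : Statement
  ref : Option (ℕ × Bool)
  deriving DecidableEq, Inhabited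

/-! ## Particle rules -/

/-- Particle rules, attacks: `Attacks a φ` holds when the statement `a` is an
admissible attack against the assertion `φ`. -/
inductive Attacks : Statement → Formula → Prop
  | conjL (φ ψ : Formula) : Attacks .conjL (.conj φ ψ)
  | conjR (φ ψ : Formula) : Attacks .conjR (.conj φ ψ)
  | disj (φ ψ : Formula) : Attacks .question (.disj φ ψ)
  | impl (φ ψ : Formula) : Attacks (.form φ) (.impl φ ψ)
  | neg (φ : Formula) : Attacks (.form φ) (.neg φ)

/-- Particle rules, defenses: `Defends s a φ` holds when the statement `s` is an
admissible defense of the assertion `φ` against the attack `a`.  (A negation admits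
no defense.) -/
inductive Defends : Statement → Statement → Formula → Prop
  | conjL (φ ψ : Formula) : Defends (.form φ) .conjL (.conj φ ψ)
  | conjR (φ ψ : Formula) : Defends (.form ψ) .conjR (.conj φ ψ)
  | disjL (φ ψ : Formula) : Defends (.form φ) .question (.disj φ ψ)
  | disjR (φ ψ : Formula) : Defends (.form ψ) .question (.disj φ ψ)
  | impl (φ ψ : Formula) : Defends (.form ψ) (.form φ) (.impl φ ψ)

/-! ## Dialogues

A (finite stage of a) dialogue is modelled as a list of moves; the move at index `i`
is the `i`-th move, made by Proponent P if `i` is even and by Opponent O if `i` is odd. -/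

/-- The skeletal dialogue conditions: move 0 is an assertion of a formula with no
reference, and every later move is an attack on, or a defense against, a specified
earlier move of the other player, in accordance with the particle rules; only
non-atomic assertions may be attacked. -/
def IsDialogue (d : List Move) : Prop :=
  (∀ _ : 0 < d.length, d[0]!.ref = none ∧ ∃ φ : Formula, d[0]!.stmt = .form φ) ∧
  (∀ i : ℕ, 0 < i → i < d.length →
    ∃ (m : ℕ) (z : Bool), d[i]!.ref = some (m, z) ∧ m < i ∧ m % 2 ≠ i % 2 ∧
      (z = true →
        ∃ φ : Formula, d[m]!.stmt = .form φ ∧ ¬ φ.isAtomic ∧ Attacks d[i]!.stmt φ) ∧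
      (z = false →
        ∃ (k : ℕ) (φ : Formula), d[m]!.ref = some (k, true) ∧ k < m ∧
          d[k]!.stmt = .form φ ∧ Defends d[i]!.stmt d[m]!.stmt φ))

/-- Rule D10: P may assert an atomic formula only if O has asserted it earlier. -/
def RuleD10 (d : List Move) : Prop :=
  ∀ i < d.length, i % 2 = 0 → ∀ a : ℕ, d[i]!.stmt = .form (.atom a) →
    ∃ j < i, j % 2 = 1 ∧ d[j]!.stmt = .form (.atom a)

/-- Rule D13: each P-assertion may be attacked at most once. -/
def RuleD13 (d : List Move) : Prop :=
  ∀ m : ℕ, m % 2 = 0 → ∀ i < d.length, ∀ j < d.length,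
    d[i]!.ref = some (m, true) → d[j]!.ref = some (m, true) → i = j

/-- Rule E: O may only react (attack or defend) against the immediately preceding
P-move. -/
def RuleE (d : List Move) : Prop :=
  ∀ i < d.length, i % 2 = 1 → ∃ z : Bool, d[i]!.ref = some (i - 1, z)

/-- The rule set N = {D10, D13}. -/
def NRules (d : List Move) : Prop := RuleD10 d ∧ RuleD13 d

/-- The rule set CL = {D10, D13, E}. -/
def CLRules (d : List Move) : Prop := RuleD10 d ∧ RuleD13 d ∧ RuleE d

/-- A dialogue commences with `φ` when its initial move is P's assertion of `φ`. -/
def CommencesWith (φ : Formula) (d : List Move) : Prop :=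
  0 < d.length ∧ d[0]!.stmt = .form φ

/-- An `S`-dialogue for `φ` (for a rule set `S`): a dialogue commencing with `φ`
that obeys the structural rules `S`.  These are exactly the branches (identified
with their underlying move sequences) of the `S`-dialogue tree for `φ`. -/
def SDialogueFor (S : List Move → Prop) (φ : Formula) (d : List Move) : Prop :=
  IsDialogue d ∧ S d ∧ CommencesWith φ d

/-- P wins a finite `S`-dialogue for `φ`: it ends with a P-move (the last index,
`d.length - 1`, is even, i.e. `d.length` is odd) and it cannot be extended by any
legal further (O-)move. -/
def WinsFor (S : List Move → Prop) (φ : Formula) (d : List Move) : Prop :=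
  SDialogueFor S φ d ∧ d.length % 2 = 1 ∧ ∀ m : Move, ¬ SDialogueFor S φ (d ++ [m])

/-- An `S`-winning strategy for P for `φ`, modelled as a set `T` of `S`-dialogues for
`φ`: the nodes of a rooted subtree of the `S`-dialogue tree for `φ`, each node being
identified with the dialogue leading from the root to it.  The conditions state that
`T` is a nonempty, prefix-closed set of `S`-dialogues for `φ` (hence a rooted subtree
of the `S`-dialogue tree with the same root), that every branch of `T` is a finite
`S`-dialogue won by P (leaves are wins for P, and there is no infinite branch), that
every node at odd depth (an O-move) has exactly one child, and that every node at
even depth (a P-move) has the same children in `T` as in the full dialogue tree. -/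
structure IsWinningStrategy (S : List Move → Prop) (φ : Formula) (T : Set (List Move)) : Prop where
  nonempty : T.Nonempty
  dialogues : ∀ d ∈ T, SDialogueFor S φ d
  prefix_closed : ∀ d ∈ T, ∀ e : List Move, e <+: d → 0 < e.length → e ∈ T
  leaf_wins : ∀ d ∈ T, (∀ m : Move, d ++ [m] ∉ T) → WinsFor S φ d
  no_infinite_branch : ∀ f : ℕ → Move, ∃ n : ℕ, 0 < n ∧ (List.ofFn fun i : Fin n => f i) ∉ T
  odd_unique_child : ∀ d ∈ T, 0 < d.length → d.length % 2 = 0 → ∃! m : Move, d ++ [m] ∈ T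
  even_all_children : ∀ d ∈ T, d.length % 2 = 1 →
    ∀ m : Move, SDialogueFor S φ (d ++ [m]) → d ++ [m] ∈ T

/-- `φ` is `S`-valid iff P has an `S`-winning strategy for `φ`. -/
def SValid (S : List Move → Prop) (φ : Formula) : Prop :=
  ∃ T : Set (List Move), IsWinningStrategy S φ T

/-- `φ` is N-valid (`⊨_N φ`) iff P has an N-winning strategy for `φ`. -/
def NValid (φ : Formula) : Prop := SValid NRules φ

/-! Rule E only takes moves away from O: it is inherited by prefixes and never forbids a P-move.
Hence, in a winning strategy for the rules N, the nodes obeying rule E form a subtree in which every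
O-move still has its unique answer, and every P-move still has all the O-replies that CL allows. A
leaf of this subtree is a P-move without legal replies, that is, a win for P. -/

/-- A structural rule, given by the dialogues obeying it, that only ever forbids moves of O: it
passes to prefixes and cannot be broken by appending a P-move. As P makes the even-indexed moves,
the latter concerns dialogues of even length, including the empty one. -/
structure RestrictsOnlyOpponent (R : List Move → Prop) : Prop where
  nil : R []
  of_prefix : ∀ {e d : List Move}, e <+: d → R d → R e
  append_proponent : ∀ {d : List Move} (m : Move), R d → d.length % 2 = 0 → R (d ++ [m])

theorem getElem!_eq_of_prefix {α : Type*} [Inhabited α] {e d : List α} (h : e <+: d) {i : ℕ}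
    (hi : i < e.length) : d[i]! = e[i]! := by
  rw [getElem!_pos e i hi, getElem!_pos d i (hi.trans_le h.length_le), h.getElem hi]

theorem RuleE.of_prefix {e d : List Move} (h : e <+: d) (hd : RuleE d) : RuleE e := by
  intro i hi hodd
  rw [← getElem!_eq_of_prefix h hi]
  exact hd i (hi.trans_le h.length_le) hodd

theorem RuleE.append_proponent {d : List Move} (m : Move) (hd : RuleE d)
    (heven : d.length % 2 = 0) : RuleE (d ++ [m]) := by
  intro i hi hodd
  have hid : i < d.length := by
    rw [List.length_append, List.length_singleton] at hi
    omega
  rw [getElem!_eq_of_prefix (List.prefix_append d [m]) hid]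
  exact hd i hid hodd

theorem restrictsOnlyOpponent_ruleE : RestrictsOnlyOpponent RuleE where
  nil _ hi := absurd hi (Nat.not_lt_zero _)
  of_prefix := RuleE.of_prefix
  append_proponent := RuleE.append_proponent

theorem sDialogueFor_inf_iff {S R : List Move → Prop} {φ : Formula} {d : List Move} :
    SDialogueFor (S ⊓ R) φ d ↔ SDialogueFor S φ d ∧ R d := by
  simp only [SDialogueFor, Pi.inf_apply, inf_Prop_eq]
  tauto

theorem CLRules_eq_NRules_inf_RuleE : CLRules = NRules ⊓ RuleE :=
  funext fun _ => propext and_assoc.symm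

namespace IsWinningStrategy

variable {S R : List Move → Prop} {φ : Formula} {T : Set (List Move)}

theorem length_pos (hT : IsWinningStrategy S φ T) {d : List Move} (hd : d ∈ T) : 0 < d.length :=
  (hT.dialogues d hd).2.2.1

theorem exists_singleton_mem (hT : IsWinningStrategy S φ T) : ∃ m : Move, [m] ∈ T := by
  obtain ⟨d, hd⟩ := hT.nonempty
  obtain ⟨m, t, rfl⟩ := List.exists_cons_of_length_pos (hT.length_pos hd)
  exact ⟨m, hT.prefix_closed _ hd [m] (List.prefix_append [m] t) Nat.one_pos⟩

theorem existsUnique_append_mem_sep (hT : IsWinningStrategy S φ T) (hR : RestrictsOnlyOpponent R)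
    {d : List Move} (hd : d ∈ {d ∈ T | R d}) (heven : d.length % 2 = 0) :
    ∃! m : Move, d ++ [m] ∈ {d ∈ T | R d} := by
  obtain ⟨m, hm, hunique⟩ := hT.odd_unique_child d hd.1 (hT.length_pos hd.1) heven
  exact ⟨m, ⟨hm, hR.append_proponent m hd.2 heven⟩, fun m' hm' => hunique m' hm'.1⟩

theorem append_mem_sep (hT : IsWinningStrategy S φ T) {d : List Move} (hd : d ∈ T)
    (hodd : d.length % 2 = 1) {m : Move} (hm : SDialogueFor (S ⊓ R) φ (d ++ [m])) :
    d ++ [m] ∈ {d ∈ T | R d} :=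
  have hSR := sDialogueFor_inf_iff.1 hm
  ⟨hT.even_all_children d hd hodd m hSR.1, hSR.2⟩

theorem winsFor_of_leaf_sep (hT : IsWinningStrategy S φ T) (hR : RestrictsOnlyOpponent R)
    {d : List Move} (hd : d ∈ {d ∈ T | R d}) (hleaf : ∀ m : Move, d ++ [m] ∉ {d ∈ T | R d}) :
    WinsFor (S ⊓ R) φ d := by
  have hodd : d.length % 2 = 1 := Nat.mod_two_ne_zero.1 fun heven =>
    let ⟨m, hm, _⟩ := hT.existsUnique_append_mem_sep hR hd heven
    hleaf m hm
  exact ⟨sDialogueFor_inf_iff.2 ⟨hT.dialogues d hd.1, hd.2⟩, hodd,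
    fun m hm => hleaf m (hT.append_mem_sep hd.1 hodd hm)⟩

theorem sep (hT : IsWinningStrategy S φ T) (hR : RestrictsOnlyOpponent R) :
    IsWinningStrategy (S ⊓ R) φ {d ∈ T | R d} where
  nonempty :=
    let ⟨m, hm⟩ := hT.exists_singleton_mem
    ⟨[m], hm, hR.append_proponent m hR.nil rfl⟩
  dialogues d hd := sDialogueFor_inf_iff.2 ⟨hT.dialogues d hd.1, hd.2⟩
  prefix_closed d hd e he hpos := ⟨hT.prefix_closed d hd.1 e he hpos, hR.of_prefix he hd.2⟩
  leaf_wins _ := hT.winsFor_of_leaf_sep hR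
  no_infinite_branch f :=
    let ⟨n, hn, hf⟩ := hT.no_infinite_branch f
    ⟨n, hn, fun h => hf h.1⟩
  odd_unique_child _ hd _ := hT.existsUnique_append_mem_sep hR hd
  even_all_children _ hd hodd _ := hT.append_mem_sep hd.1 hodd

end IsWinningStrategy

theorem N_valid_implies_CL_valid_general {S R : List Move → Prop} {φ : Formula}
    (hR : RestrictsOnlyOpponent R) (h : SValid S φ) : SValid (S ⊓ R) φ := by
  obtain ⟨T, hT⟩ := h
  exact ⟨{d ∈ T | R d}, hT.sep hR⟩

/-- Every N-valid formula is CL-valid: if P has a winning strategy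
in the dialogue game with rules D10 and D13, then P has a winning strategy in the
dialogue game with rules D10, D13 and E. -/
theorem N_valid_implies_CL_valid (φ : Formula) (h : SValid NRules φ) :
    SValid CLRules φ := by
  rw [CLRules_eq_NRules_inf_RuleE]
  exact N_valid_implies_CL_valid_general restrictsOnlyOpponent_ruleE h
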